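/- Let S be a numerical semigroup minimally generated by four elements n_1 < n_2 < n_3 < n_4, and for each j let c_j be the least positive integer such that c_j·n_j lies in the submonoid of ℕ generated by {n_l : l ≠ j}. The following are equivalent: (1) S is homogeneous; (2) the set {c_2·n_2, c_3·n_3, c_4·n_4} ∩ AP(S,n_1) is homogeneous; (3) c_2·n_2 ∉ AP(S,n_1), c_4·n_4 ∉ AP(S,n_1), and if c_3·n_3 ∈ AP(S,n_1) then all factorizations of c_3·n_3 have the same length. -/

import Mathlib

open scoped BigOperators

/-- The value `Σ aᵢ nᵢ` of a tuple of coefficients `a` w.r.t. the generators `n`. -/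
def sval {d : ℕ} (n : Fin d → ℕ) (a : Fin d → ℕ) : ℕ := ∑ i, a i * n i

/-- The total length `Σ aᵢ` of a factorization. -/
def tlen {d : ℕ} (a : Fin d → ℕ) : ℕ := ∑ i, a i

/-- The submonoid of `ℕ` generated by `n`. -/
def gen {d : ℕ} (n : Fin d → ℕ) : Set ℕ := {s : ℕ | ∃ a : Fin d → ℕ, s = sval n a}

/-- The Apéry set of the semigroup generated by `n` with respect to `s`:
elements `x` of the semigroup such that `x - s` is not in the semigroup. -/
def Apery {d : ℕ} (n : Fin d → ℕ) (s : ℕ) : Set ℕ :=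
  {x : ℕ | x ∈ gen n ∧ ¬ ∃ y ∈ gen n, x = s + y}

/-- A subset `T` is homogeneous if every nonzero element of `T` has all its
factorizations of the same length. -/
def HomogSet {d : ℕ} (n : Fin d → ℕ) (T : Set ℕ) : Prop :=
  ∀ t ∈ T, t ≠ 0 → ∀ a b : Fin d → ℕ, sval n a = t → sval n b = t → tlen a = tlen b

/-- The order of `s`: the maximal length of a factorization of `s`. -/
noncomputable def ordS {d : ℕ} (n : Fin d → ℕ) (s : ℕ) : ℕ :=
  sSup {l : ℕ | ∃ a : Fin d → ℕ, sval n a = s ∧ tlen a = l}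

/-- The torsion set of the semigroup generated by `n`, with respect to the
generator of index `i0` (the smallest generator). -/
noncomputable def Torsion {d : ℕ} (n : Fin d → ℕ) (i0 : Fin d) : Set ℕ :=
  {s : ℕ | s ∈ gen n ∧ ∃ c : ℕ, 0 < c ∧ ordS n s + c < ordS n (s + c * n i0)}

/-- `n` is a minimal system of generators: any expression of a generator as a
nonnegative combination of the generators has total coefficient sum one. -/
def MinGen {d : ℕ} (n : Fin d → ℕ) : Prop :=
  ∀ r : Fin d, ∀ a : Fin d → ℕ, n r = sval n a → tlen a = 1

/-- `n` generates a numerical semigroup (cofinite in `ℕ`). -/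
def IsNumerical {d : ℕ} (n : Fin d → ℕ) : Prop := {x : ℕ | x ∉ gen n}.Finite

/-- The monomial `x^a = Π xᵢ^{aᵢ}`. -/
noncomputable def monom (k : Type*) [CommRing k] {d : ℕ} (a : Fin d → ℕ) :
    MvPolynomial (Fin d) k :=
  ∏ i, (MvPolynomial.X i : MvPolynomial (Fin d) k) ^ a i

/-- The toric ideal `I_S`: kernel of `k[x₁,…,x_d] → k[t]`, `xᵢ ↦ t^{nᵢ}`. -/
noncomputable def toricIdeal (k : Type*) [CommRing k] {d : ℕ} (n : Fin d → ℕ) :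
    Ideal (MvPolynomial (Fin d) k) :=
  RingHom.ker (MvPolynomial.aeval (R := k)
    (fun i => (Polynomial.X : Polynomial k) ^ n i)).toRingHom

/-- `E` is a minimal generating set of the ideal `I`: it spans `I` and no
proper subset spans `I`. -/
def IsMinGenSet {R : Type*} [CommRing R] (I : Ideal R) (E : Set R) : Prop :=
  Ideal.span E = I ∧ ∀ E' : Set R, E' ⊂ E → Ideal.span E' ≠ I

/-- Membership of an integer in the semigroup generated by `n`. -/
def memZ {d : ℕ} (n : Fin d → ℕ) (z : ℤ) : Prop := ∃ x ∈ gen n, (x : ℤ) = z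

/-- A numerical semigroup with Frobenius number `F = max (ℤ ∖ S)` is symmetric
if for every integer `z`, `z ∈ S ↔ F - z ∉ S`. -/
def IsSymmetric {d : ℕ} (n : Fin d → ℕ) : Prop :=
  ∃ F : ℤ, ¬ memZ n F ∧ (∀ z : ℤ, F < z → memZ n z) ∧
    ∀ z : ℤ, memZ n z ↔ ¬ memZ n (F - z)

/-- A numerical semigroup with Frobenius number `F = max (ℤ ∖ S)` is
pseudo-symmetric if `F` is even and for every integer `z`,
`z ∈ S ↔ (z ≠ F/2 ∧ F - z ∉ S)`. -/
def IsPseudoSymmetric {d : ℕ} (n : Fin d → ℕ) : Prop :=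
  ∃ F : ℤ, ¬ memZ n F ∧ (∀ z : ℤ, F < z → memZ n z) ∧ F % 2 = 0 ∧
    ∀ z : ℤ, memZ n z ↔ (z ≠ F / 2 ∧ ¬ memZ n (F - z))

/-- The generators `q·m₁,…,q·m_d, p·n₁,…,p·n_e` of the gluing of two numerical
semigroups. -/
def glueGen {d e : ℕ} (mg : Fin d → ℕ) (ng : Fin e → ℕ) (p q : ℕ) :
    Fin (d + e) → ℕ :=
  Fin.append (fun i => q * mg i) (fun i => p * ng i)

/-!
Two factorizations of an element of an Apéry set that use a common generator can be compared by
induction, after that generator is cancelled. Factorizations of elements of `AP(S, n₁)` involve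
only three generators, so of two factorizations with disjoint supports one is a multiple of a
single generator `nⱼ`, and then `cⱼ nⱼ ∈ AP(S, n₁)`. Under condition (3) this forces `j = 3`, and
the other factorization uses both `n₂` and `n₄`. Trading `c₃ n₃` for one of its other
factorizations keeps the length and creates a common generator. Conversely, `c₂ n₂` and `c₄ n₄`
cannot be rewritten at constant length, since `n₂` and `n₄` are extreme among `n₂, n₃, n₄`.

(Here `nⱼ` and `cⱼ` are numbered from `1`, as `n (j - 1)` and `c (j - 1)`.)
-/

section Factorizations

variable {d : ℕ} (n a b : Fin d → ℕ) (l : Fin d) (k : ℕ)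

theorem sval_add : sval n (a + b) = sval n a + sval n b :=
  add_dotProduct a b n

theorem sval_single : sval n (Pi.single l k) = k * n l :=
  single_dotProduct n k l

theorem tlen_add : tlen (a + b) = tlen a + tlen b :=
  Finset.sum_add_distrib

theorem sval_const (m : ℕ) : sval (fun _ => m) a = tlen a * m :=
  (Finset.sum_mul _ _ _).symm

theorem tlen_single : tlen (Pi.single l k) = k :=
  Fintype.sum_pi_single' l k

theorem exists_eq_add_single_of_ne_zero {a : Fin d → ℕ} {i : Fin d} (h : a i ≠ 0) :
    ∃ a' : Fin d → ℕ, a = a' + Pi.single i 1 := by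
  have hle : Pi.single i 1 ≤ a := by
    intro j
    obtain rfl | hj := eq_or_ne j i
    · simpa using Nat.one_le_iff_ne_zero.mpr h
    · simp [hj]
  exact ⟨a - Pi.single i 1, (tsub_add_cancel_of_le hle).symm⟩

theorem exists_eq_single_of_card_support_le_one [NeZero d] {a : Fin d → ℕ}
    (h : (Finset.univ.filter (a · ≠ 0)).card ≤ 1) : ∃ l k, a = Pi.single l k := by
  obtain ⟨l, hl⟩ := Finset.card_le_one_iff_subset_singleton.mp h
  refine ⟨l, a l, ?_⟩
  ext j
  obtain rfl | hj := eq_or_ne j l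
  · simp
  · rw [Pi.single_eq_of_ne hj]
    by_contra haj
    exact hj (Finset.mem_singleton.mp (hl (by simpa using haj)))

theorem sval_mem_gen : sval n a ∈ gen n :=
  ⟨a, rfl⟩

theorem mul_mem_gen : k * n l ∈ gen n :=
  ⟨Pi.single l k, (sval_single n l k).symm⟩

variable {n a}

theorem add_mem_gen {x y : ℕ} (hx : x ∈ gen n) (hy : y ∈ gen n) : x + y ∈ gen n := by
  obtain ⟨a, rfl⟩ := hx
  obtain ⟨b, rfl⟩ := hy
  exact ⟨a + b, (sval_add n a b).symm⟩

theorem sval_lt_sval {m : Fin d → ℕ} (ha : a ≠ 0) (h : ∀ i, a i ≠ 0 → m i < n i) :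
    sval m a < sval n a := by
  obtain ⟨i, hi⟩ := Function.ne_iff.mp ha
  refine Finset.sum_lt_sum (fun j _ => ?_) ⟨i, Finset.mem_univ i, ?_⟩
  · obtain hj | hj := eq_or_ne (a j) 0
    · simp [hj]
    · exact Nat.mul_le_mul_left _ (h j hj).le
  · exact Nat.mul_lt_mul_of_pos_left (h i hi) (Nat.pos_of_ne_zero hi)

end Factorizations

section Apery

variable {d : ℕ} {n a b : Fin d → ℕ} {i l : Fin d} {s k c : ℕ}

theorem mem_apery_of_add_mem_apery {x y : ℕ} (hx : x ∈ gen n) (hy : y ∈ gen n)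
    (h : x + y ∈ Apery n s) : x ∈ Apery n s := by
  refine ⟨hx, ?_⟩
  rintro ⟨z, hz, rfl⟩
  exact h.2 ⟨z + y, add_mem_gen hz hy, add_assoc s z y⟩

theorem mul_mem_apery_of_le (hck : c ≤ k) (h : k * n l ∈ Apery n s) : c * n l ∈ Apery n s := by
  obtain ⟨e, rfl⟩ := Nat.exists_eq_add_of_le hck
  rw [add_mul] at h
  exact mem_apery_of_add_mem_apery (mul_mem_gen n l c) (mul_mem_gen n l e) h

theorem apply_eq_zero_of_sval_mem_apery (h : sval n a ∈ Apery n (n i)) : a i = 0 := by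
  by_contra hi
  obtain ⟨a', rfl⟩ := exists_eq_add_single_of_ne_zero hi
  refine h.2 ⟨sval n a', sval_mem_gen n a', ?_⟩
  rw [sval_add, sval_single, one_mul, add_comm]

/-- All factorizations of `t` have the same length. The set `T` is homogeneous when this holds at
every nonzero `t ∈ T`. -/
def EqualLengths (n : Fin d → ℕ) (t : ℕ) : Prop :=
  ∀ a b : Fin d → ℕ, sval n a = t → sval n b = t → tlen a = tlen b

theorem equalLengths_zero (hpos : ∀ i, 0 < n i) : EqualLengths n 0 := by
  have eq_zero : ∀ a, sval n a = 0 → a = 0 := by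
    intro a ha
    by_contra hne
    exact (Nat.zero_le _).not_gt (ha ▸ sval_lt_sval (m := 0) hne fun i _ => hpos i)
  intro a b ha hb
  rw [eq_zero a ha, eq_zero b hb]

theorem tlen_eq_of_common_generator {t : ℕ} (ht : t ∈ Apery n s)
    (ih : ∀ t' < t, t' ∈ Apery n s → EqualLengths n t') (hpos : 0 < n i)
    (hai : a i ≠ 0) (hbi : b i ≠ 0) (ha : sval n a = t) (hb : sval n b = t) :
    tlen a = tlen b := by
  obtain ⟨a', rfl⟩ := exists_eq_add_single_of_ne_zero hai
  obtain ⟨b', rfl⟩ := exists_eq_add_single_of_ne_zero hbi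
  subst ha
  simp only [sval_add, sval_single, one_mul] at ht ih hb
  have hmem : sval n a' ∈ Apery n s :=
    mem_apery_of_add_mem_apery (sval_mem_gen n a') (one_mul (n i) ▸ mul_mem_gen n i 1) ht
  have hlen : tlen a' = tlen b' :=
    ih _ (Nat.lt_add_of_pos_right hpos) hmem a' b' rfl (Nat.add_right_cancel hb)
  rw [tlen_add, tlen_add, hlen]

/-- The positive `k` such that `k n_l` is a combination of the other generators. The constant
`c_l` of the paper is the least element of this set. -/
def relationMultipliers (n : Fin d → ℕ) (l : Fin d) : Set ℕ :=
  {k | 0 < k ∧ ∃ a : Fin d → ℕ, a l = 0 ∧ k * n l = sval n a}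

theorem mul_mem_apery_of_isLeast (hc : IsLeast (relationMultipliers n l) c)
    (hk : k ∈ relationMultipliers n l) (h : k * n l ∈ Apery n s) : c * n l ∈ Apery n s :=
  mul_mem_apery_of_le (hc.2 hk) h

theorem exists_relation_tlen_eq (hk : k ∈ relationMultipliers n l)
    (hmem : k * n l ∈ Apery n (n i)) (hlen : EqualLengths n (k * n l)) :
    ∃ a : Fin d → ℕ, a ≠ 0 ∧ a i = 0 ∧ a l = 0 ∧ sval n a = k * n l ∧ tlen a = k := by
  obtain ⟨hpos, a, hal, ha⟩ := hk
  have htlen : tlen a = k := by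
    rw [hlen a (Pi.single l k) ha.symm (sval_single n l k), tlen_single]
  refine ⟨a, ?_, apply_eq_zero_of_sval_mem_apery (ha ▸ hmem), hal, ha.symm, htlen⟩
  rintro rfl
  exact hpos.ne (by simpa [tlen] using htlen)

theorem exists_tlen_eq_exchange (hc : IsLeast (relationMultipliers n l) c)
    (hlen : EqualLengths n (c * n l)) (hk : k ∈ relationMultipliers n l)
    (hmem : k * n l ∈ Apery n (n i)) :
    ∃ a : Fin d → ℕ, sval n a = k * n l ∧ tlen a = k ∧ ∃ j, j ≠ i ∧ j ≠ l ∧ a j ≠ 0 := by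
  obtain ⟨r, hr, hri, hrl, hval, htlen⟩ :=
    exists_relation_tlen_eq hc.1 (mul_mem_apery_of_isLeast hc hk hmem) hlen
  obtain ⟨e, rfl⟩ := Nat.exists_eq_add_of_le (hc.2 hk)
  obtain ⟨j, hj⟩ := Function.ne_iff.mp hr
  refine ⟨r + Pi.single l e, ?_, ?_, j, ?_, ?_, ?_⟩
  · rw [sval_add, sval_single, hval, add_mul]
  · rw [tlen_add, tlen_single, htlen]
  · rintro rfl
    exact hj hri
  · rintro rfl
    exact hj hrl
  · exact (Nat.add_pos_left (Nat.pos_of_ne_zero hj) _).ne'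

theorem mul_notMem_apery_of_forall_lt (hl : ∀ j ≠ i, j ≠ l → n l < n j)
    (hk : k ∈ relationMultipliers n l) (hlen : EqualLengths n (k * n l)) :
    k * n l ∉ Apery n (n i) := by
  intro hmem
  obtain ⟨a, ha, hai, hal, hval, htlen⟩ := exists_relation_tlen_eq hk hmem hlen
  have hlt : sval (fun _ => n l) a < sval n a := sval_lt_sval ha fun j hj =>
    hl j (by rintro rfl; exact hj hai) (by rintro rfl; exact hj hal)
  rw [sval_const, hval, htlen] at hlt
  exact hlt.false

theorem mul_notMem_apery_of_forall_gt (hl : ∀ j ≠ i, j ≠ l → n j < n l)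
    (hk : k ∈ relationMultipliers n l) (hlen : EqualLengths n (k * n l)) :
    k * n l ∉ Apery n (n i) := by
  intro hmem
  obtain ⟨a, ha, hai, hal, hval, htlen⟩ := exists_relation_tlen_eq hk hmem hlen
  have hlt : sval n a < sval (fun _ => n l) a := sval_lt_sval ha fun j hj =>
    hl j (by rintro rfl; exact hj hai) (by rintro rfl; exact hj hal)
  rw [sval_const, hval, htlen] at hlt
  exact hlt.false

end Apery

section EmbeddingDimensionFour

variable {n a b : Fin 4 → ℕ} {l : Fin 4} {k c₂ : ℕ}

theorem eq_single_or_eq_single_of_disjoint (ha0 : a 0 = 0) (hb0 : b 0 = 0)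
    (hab : ∀ i, a i = 0 ∨ b i = 0) : ∃ l k, a = Pi.single l k ∨ b = Pi.single l k := by
  let A : Finset (Fin 4) := Finset.univ.filter (a · ≠ 0)
  let B : Finset (Fin 4) := Finset.univ.filter (b · ≠ 0)
  have hdisj : Disjoint A B :=
    Finset.disjoint_filter.mpr fun i _ hai hbi => (hab i).elim hai hbi
  have hsub : A ∪ B ⊆ Finset.univ.erase 0 := by
    intro i hi
    refine Finset.mem_erase.mpr ⟨?_, Finset.mem_univ i⟩
    rintro rfl
    simp [A, B, ha0, hb0] at hi
  have hcard : A.card + B.card ≤ 3 := by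
    simpa [Finset.card_union_of_disjoint hdisj] using Finset.card_le_card hsub
  obtain hA | hB : A.card ≤ 1 ∨ B.card ≤ 1 := by omega
  · obtain ⟨l, k, hal⟩ := exists_eq_single_of_card_support_le_one hA
    exact ⟨l, k, .inl hal⟩
  · obtain ⟨l, k, hbl⟩ := exists_eq_single_of_card_support_le_one hB
    exact ⟨l, k, .inr hbl⟩

theorem apply_ne_zero_of_sval_eq_mul_two (hpos : 0 < n 2)
    (hcrit : ∀ l ≠ 0, ∀ k ∈ relationMultipliers n l, k * n l ∈ Apery n (n 0) → l = 2)
    (hk : 0 < k) (hmem : k * n 2 ∈ Apery n (n 0)) (hb : sval n b = k * n 2) (hb2 : b 2 = 0)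
    {j : Fin 4} (hj0 : j ≠ 0) (hj2 : j ≠ 2) : b j ≠ 0 := by
  have hb0 : b 0 = 0 := apply_eq_zero_of_sval_mem_apery (hb ▸ hmem)
  intro hbj
  obtain ⟨l, hl0, hl2, hbl⟩ : ∃ l : Fin 4, l ≠ 0 ∧ l ≠ 2 ∧ k * n 2 = b l * n l := by
    rw [sval, Fin.sum_univ_four, hb0, hb2] at hb
    obtain rfl | rfl : j = 1 ∨ j = 3 := by omega
    · exact ⟨3, by decide, by decide, by simp [← hb, hbj]⟩
    · exact ⟨1, by decide, by decide, by simp [← hb, hbj]⟩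
  have hbl_pos : 0 < b l := Nat.pos_of_mul_pos_right (hbl ▸ Nat.mul_pos hk hpos)
  have hrel : b l ∈ relationMultipliers n l :=
    ⟨hbl_pos, Pi.single 2 k, by simp [hl2], by rw [sval_single, hbl]⟩
  exact hl2 (hcrit l hl0 (b l) hrel (hbl ▸ hmem))

theorem tlen_eq_of_sval_eq_mul (hpos : ∀ i, 0 < n i)
    (hcrit : ∀ l ≠ 0, ∀ k ∈ relationMultipliers n l, k * n l ∈ Apery n (n 0) → l = 2)
    (hc : IsLeast (relationMultipliers n 2) c₂)
    (hlen : c₂ * n 2 ∈ Apery n (n 0) → EqualLengths n (c₂ * n 2))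
    (hmem : k * n l ∈ Apery n (n 0))
    (ih : ∀ t < k * n l, t ∈ Apery n (n 0) → EqualLengths n t)
    (hl : l ≠ 0) (hk : 0 < k) (hb : sval n b = k * n l) (hbl : b l = 0) : tlen b = k := by
  have hrel : k ∈ relationMultipliers n l := ⟨hk, b, hbl, hb.symm⟩
  obtain rfl : l = 2 := hcrit l hl k hrel hmem
  obtain ⟨a, ha, htlen, j, hj0, hj2, haj⟩ :=
    exists_tlen_eq_exchange hc (hlen (mul_mem_apery_of_isLeast hc hrel hmem)) hrel hmem
  have hbj : b j ≠ 0 := apply_ne_zero_of_sval_eq_mul_two (hpos 2) hcrit hk hmem hb hbl hj0 hj2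
  rw [← htlen, tlen_eq_of_common_generator hmem ih (hpos j) haj hbj ha hb]

theorem equalLengths_of_mem_apery (hpos : ∀ i, 0 < n i)
    (hcrit : ∀ l ≠ 0, ∀ k ∈ relationMultipliers n l, k * n l ∈ Apery n (n 0) → l = 2)
    (hc : IsLeast (relationMultipliers n 2) c₂)
    (hlen : c₂ * n 2 ∈ Apery n (n 0) → EqualLengths n (c₂ * n 2)) (t : ℕ)
    (ht : t ∈ Apery n (n 0)) : EqualLengths n t := by
  induction t using Nat.strong_induction_on with
  | _ t ih =>
  obtain rfl | ht0 := eq_or_ne t 0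
  · exact equalLengths_zero hpos
  intro a b ha hb
  by_cases hcommon : ∃ i, a i ≠ 0 ∧ b i ≠ 0
  · obtain ⟨i, hai, hbi⟩ := hcommon
    exact tlen_eq_of_common_generator ht ih (hpos i) hai hbi ha hb
  have hab : ∀ i, a i = 0 ∨ b i = 0 := by
    simpa only [not_exists, not_and_or, not_not] using hcommon
  have ha0 : a 0 = 0 := apply_eq_zero_of_sval_mem_apery (ha ▸ ht)
  have hb0 : b 0 = 0 := apply_eq_zero_of_sval_mem_apery (hb ▸ ht)
  obtain ⟨l, k, hsingle⟩ := eq_single_or_eq_single_of_disjoint ha0 hb0 hab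
  wlog hal : a = Pi.single l k generalizing a b
  · exact (this b a hb ha (by simpa only [and_comm] using hcommon) (fun i => (hab i).symm)
      hb0 ha0 hsingle.symm (hsingle.resolve_left hal)).symm
  subst hal
  rw [sval_single] at ha
  subst ha
  have hk : 0 < k := Nat.pos_of_ne_zero (left_ne_zero_of_mul ht0)
  have hl : l ≠ 0 := by
    rintro rfl
    exact hk.ne' (by simpa using ha0)
  have hbl : b l = 0 := (hab l).resolve_left (by simpa using hk.ne')
  rw [tlen_single, tlen_eq_of_sval_eq_mul hpos hcrit hc hlen ht ih hl hk hb hbl]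

theorem homogSet_apery_of_equalLengths {c : Fin 4 → ℕ} (hpos : ∀ i, 0 < n i)
    (hc : ∀ l ≠ 0, IsLeast (relationMultipliers n l) (c l))
    (h1 : c 1 * n 1 ∉ Apery n (n 0)) (h3 : c 3 * n 3 ∉ Apery n (n 0))
    (h2 : c 2 * n 2 ∈ Apery n (n 0) → EqualLengths n (c 2 * n 2)) :
    HomogSet n (Apery n (n 0)) := by
  have hcrit : ∀ l ≠ 0, ∀ k ∈ relationMultipliers n l, k * n l ∈ Apery n (n 0) → l = 2 := by
    intro l hl k hk hmem
    have hmem_c := mul_mem_apery_of_isLeast (hc l hl) hk hmem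
    have hl1 : l ≠ 1 := by
      rintro rfl
      exact h1 hmem_c
    have hl3 : l ≠ 3 := by
      rintro rfl
      exact h3 hmem_c
    omega
  exact fun t ht _ => equalLengths_of_mem_apery hpos hcrit (hc 2 (by decide)) h2 t ht

theorem notMem_apery_of_homogSet {c : Fin 4 → ℕ} (hpos : ∀ i, 0 < n i) (h12 : n 1 < n 2)
    (h23 : n 2 < n 3) (hc : ∀ l ≠ 0, c l ∈ relationMultipliers n l)
    (h : HomogSet n (({c 1 * n 1, c 2 * n 2, c 3 * n 3} : Set ℕ) ∩ Apery n (n 0))) :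
    c 1 * n 1 ∉ Apery n (n 0) ∧ c 3 * n 3 ∉ Apery n (n 0) ∧
      (c 2 * n 2 ∈ Apery n (n 0) → EqualLengths n (c 2 * n 2)) := by
  have hlen : ∀ l ≠ 0, c l * n l ∈ Apery n (n 0) → EqualLengths n (c l * n l) := by
    intro l hl hmem
    refine h _ ⟨?_, hmem⟩ (Nat.mul_pos (hc l hl).1 (hpos l)).ne'
    obtain rfl | rfl | rfl : l = 1 ∨ l = 2 ∨ l = 3 := by omega
    all_goals simp
  have hmin : ∀ j ≠ 0, j ≠ 1 → n 1 < n j := by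
    intro j hj0 hj1
    obtain rfl | rfl : j = 2 ∨ j = 3 := by omega
    exacts [h12, h12.trans h23]
  have hmax : ∀ j ≠ 0, j ≠ 3 → n j < n 3 := by
    intro j hj0 hj3
    obtain rfl | rfl : j = 1 ∨ j = 2 := by omega
    exacts [h12.trans h23, h23]
  refine ⟨fun hmem => ?_, fun hmem => ?_, hlen 2 (by decide)⟩
  · exact mul_notMem_apery_of_forall_lt hmin (hc 1 (by decide)) (hlen 1 (by decide) hmem) hmem
  · exact mul_notMem_apery_of_forall_gt hmax (hc 3 (by decide)) (hlen 3 (by decide) hmem) hmem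

end EmbeddingDimensionFour

theorem statement9_general (n : Fin 4 → ℕ) (hpos : ∀ i, 0 < n i) (h12 : n 1 < n 2)
    (h23 : n 2 < n 3) (c : Fin 4 → ℕ) (hc : ∀ l ≠ 0, IsLeast (relationMultipliers n l) (c l)) :
    (HomogSet n (Apery n (n 0)) ↔
      HomogSet n (({c 1 * n 1, c 2 * n 2, c 3 * n 3} : Set ℕ) ∩ Apery n (n 0))) ∧
    (HomogSet n (Apery n (n 0)) ↔
      (c 1 * n 1 ∉ Apery n (n 0) ∧ c 3 * n 3 ∉ Apery n (n 0) ∧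
        (c 2 * n 2 ∈ Apery n (n 0) → EqualLengths n (c 2 * n 2)))) := by
  have h_restrict : HomogSet n (Apery n (n 0)) →
      HomogSet n (({c 1 * n 1, c 2 * n 2, c 3 * n 3} : Set ℕ) ∩ Apery n (n 0)) :=
    fun h t ht => h t ht.2
  have h_critical := notMem_apery_of_homogSet hpos h12 h23 fun l hl => (hc l hl).1
  have h_extend : (c 1 * n 1 ∉ Apery n (n 0) ∧ c 3 * n 3 ∉ Apery n (n 0) ∧
      (c 2 * n 2 ∈ Apery n (n 0) → EqualLengths n (c 2 * n 2))) → HomogSet n (Apery n (n 0)) :=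
    fun ⟨h1, h3, h2⟩ => homogSet_apery_of_equalLengths hpos hc h1 h3 h2
  exact ⟨⟨h_restrict, h_extend ∘ h_critical⟩, ⟨h_critical ∘ h_restrict, h_extend⟩⟩

/-- in embedding dimension 4, `S` is homogeneous iff
`{c₂n₂, c₃n₃, c₄n₄} ∩ AP(S,n₁)` is homogeneous, iff `c₂n₂, c₄n₄ ∉ AP(S,n₁)`
and, when `c₃n₃ ∈ AP(S,n₁)`, all factorizations of `c₃n₃` have the same
length. -/
theorem statement9 (n : Fin 4 → ℕ) (hmono : StrictMono n) (hpos : 0 < n 0)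
    (hnum : IsNumerical n) (hmin : MinGen n)
    (c : Fin 4 → ℕ)
    (hc : ∀ l : Fin 4, 0 < c l ∧
      (∃ a : Fin 4 → ℕ, a l = 0 ∧ c l * n l = sval n a) ∧
      (∀ c' : ℕ, 0 < c' → (∃ a : Fin 4 → ℕ, a l = 0 ∧ c' * n l = sval n a) →
        c l ≤ c')) :
    (HomogSet n (Apery n (n 0)) ↔
      HomogSet n (({c 1 * n 1, c 2 * n 2, c 3 * n 3} : Set ℕ) ∩
        Apery n (n 0))) ∧
    (HomogSet n (Apery n (n 0)) ↔
      (c 1 * n 1 ∉ Apery n (n 0) ∧ c 3 * n 3 ∉ Apery n (n 0) ∧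
        (c 2 * n 2 ∈ Apery n (n 0) →
          ∀ a b : Fin 4 → ℕ, sval n a = c 2 * n 2 → sval n b = c 2 * n 2 →
            tlen a = tlen b))) := by
  have hpos_all : ∀ i, 0 < n i := fun i => hpos.trans_le (hmono.monotone (Fin.zero_le i))
  exact statement9_general n hpos_all (hmono (by decide)) (hmono (by decide)) c
    fun l _ => ⟨⟨(hc l).1, (hc l).2.1⟩, fun k hk => (hc l).2.2 k hk.1 hk.2⟩
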